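/- arXiv:2506.21836 — 6 statements merged into one kernel-verified Lean document; each statement's English description precedes it below -/
import Mathlib

section
/- If |X| ≥ 3, the lexicographic excellence solution R^L does not satisfy independence of non-unanimous improvements (INUI): there exist ≿ ∈ ℛ(𝔛) with classes Σ_1 ≻ ⋯ ≻ Σ_l, an index k, Δ ⊆ Σ_k and x, y ∈ X with x, y ∉ ⋂Δ such that the restrictions to {x, y} of R^L_≿ and R^L_{≿'} differ, where ≿' : Σ_1 ≻' ⋯ ≻' Σ_{k−1} ≻' Δ ≻' Σ_k ∖ Δ ≻' ⋯ ≻' Σ_l. -/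
/-!
Social ranking solutions (SRSs).  The set of individuals is a finite type `X`;
coalitions are elements of `Finset X` (so the domain of a power relation is the
whole power set `𝔛 = 2^X`).  A weak order `≿ ∈ ℛ(𝔛)` is encoded as a relation
`r : Finset X → Finset X → Prop` together with (when needed) its list of
equivalence classes `L = [Σ₁, …, Σ_l]` in strictly decreasing order
(`IsClassList r L`).
-/

namespace SocialRanking

variable {X : Type*} [Fintype X] [DecidableEq X]

/-- A weak order: a reflexive, complete and transitive binary relation. -/
def IsWeakOrder {A : Type*} (r : A → A → Prop) : Prop :=
  Reflexive r ∧ (∀ a b, r a b ∨ r b a) ∧ Transitive r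

/-- A social ranking solution maps every weak order on `2^X` to a weak order on `X`. -/
def IsSRS (R : (Finset X → Finset X → Prop) → X → X → Prop) : Prop :=
  ∀ r, IsWeakOrder r → IsWeakOrder (R r)

/-- `IsClassList r L` : `L = [Σ₁, …, Σ_l]` is the list of the equivalence classes of
the weak order `r` on `2^X`, in strictly decreasing order (`≿ : Σ₁ ≻ ⋯ ≻ Σ_l`):
every class is nonempty, every coalition lies in exactly one class, and
`S ≿ T ↔ i ≤ j` whenever `S ∈ Σᵢ` and `T ∈ Σⱼ` (0-based indices). -/
def IsClassList (r : Finset X → Finset X → Prop) (L : List (Finset (Finset X))) : Prop :=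
  (∀ C ∈ L, C.Nonempty) ∧
  (∀ S : Finset X, ∃! i : ℕ, i < L.length ∧ S ∈ L.getD i ∅) ∧
  (∀ i j : ℕ, i < L.length → j < L.length →
    ∀ S ∈ L.getD i ∅, ∀ T ∈ L.getD j ∅, (r S T ↔ i ≤ j))

/-- The asymmetric (strict) part `P` of a relation. -/
def StrictPart {A : Type*} (p : A → A → Prop) (a b : A) : Prop := p a b ∧ ¬ p b a

/-- The symmetric part `I` (indifference) of a relation. -/
def IndiffPart {A : Type*} (p : A → A → Prop) (a b : A) : Prop := p a b ∧ p b a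

/-- The restrictions of `p` and `q` to `{x, y}` coincide. -/
def AgreeOn (p q : X → X → Prop) (x y : X) : Prop :=
  ∀ a ∈ ({x, y} : Set X), ∀ b ∈ ({x, y} : Set X), (p a b ↔ q a b)

/-- `|Δ[x]|` : the number of coalitions in `Δ` containing `x`. -/
def count (Δ : Finset (Finset X)) (x : X) : ℕ := (Δ.filter (fun S => x ∈ S)).card

/-! ### Independence axioms and further axioms -/

/-- WIVIP: for a dichotomous `≿ : Σ₁ ≻ Σ₂`, any `x ∈ ⋂Σ₁` is socially strictly above
any `y ∉ ⋂Σ₁`. -/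
def WIVIP (R : (Finset X → Finset X → Prop) → X → X → Prop) : Prop :=
  ∀ (r : Finset X → Finset X → Prop) (C₁ C₂ : Finset (Finset X)),
    IsClassList r [C₁, C₂] →
    ∀ x y : X, (∀ S ∈ C₁, x ∈ S) → (∃ S ∈ C₁, y ∉ S) →
    StrictPart (R r) x y

/-- IWS (independence from the worst set): if `≿ : Σ₁ ≻ ⋯ ≻ Σ_{l-1} ≻ Σ_l` (`l ≥ 2`)
and `≿'` is obtained from `≿` by partitioning the worst class `Σ_l` into ordered
classes `Γ₁ ≻' ⋯ ≻' Γ_{l'}`, then `x P_≿ y` implies `x P_≿' y`. -/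
def IWS (R : (Finset X → Finset X → Prop) → X → X → Prop) : Prop :=
  ∀ (r r' : Finset X → Finset X → Prop) (L Γ : List (Finset (Finset X)))
    (W : Finset (Finset X)),
    L ≠ [] → IsClassList r (L ++ [W]) → IsClassList r' (L ++ Γ) →
    ∀ x y : X, StrictPart (R r) x y → StrictPart (R r') x y

/-- IBS (independence from the best set): if `≿ : Σ₁ ≻ Σ₂ ≻ ⋯ ≻ Σ_l` (`l ≥ 2`)
and `≿'` is obtained from `≿` by partitioning the best class `Σ₁` into ordered
classes `Γ₁ ≻' ⋯ ≻' Γ_{l'}`, then `x P_≿ y` implies `x P_≿' y`. -/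
def IBS (R : (Finset X → Finset X → Prop) → X → X → Prop) : Prop :=
  ∀ (r r' : Finset X → Finset X → Prop) (B : Finset (Finset X))
    (L Γ : List (Finset (Finset X))),
    L ≠ [] → IsClassList r (B :: L) → IsClassList r' (Γ ++ L) →
    ∀ x y : X, StrictPart (R r) x y → StrictPart (R r') x y

/-- TO (tops-only): two weak orders with the same best equivalence class get the
same social ranking. -/
def TO (R : (Finset X → Finset X → Prop) → X → X → Prop) : Prop :=
  ∀ (r r' : Finset X → Finset X → Prop) (B : Finset (Finset X))
    (L L' : List (Finset (Finset X))),
    IsClassList r (B :: L) → IsClassList r' (B :: L') → R r = R r'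

/-- The class list obtained from `L` by sliding `Δ` out of class `k₁` into class `k₂`
(`Σ_{k₁}` is replaced by `Σ_{k₁} \ Δ` and `Σ_{k₂}` by `Σ_{k₂} ∪ Δ`; if `Δ = Σ_{k₁}`
the emptied class disappears). -/
def slide (L : List (Finset (Finset X))) (k₁ k₂ : ℕ) (Δ : Finset (Finset X)) :
    List (Finset (Finset X)) :=
  ((L.set k₁ ((L.getD k₁ ∅) \ Δ)).set k₂ ((L.getD k₂ ∅) ∪ Δ)).filter
    (fun C => decide (C ≠ ∅))

/-- SI (slide independence): sliding a proper subfamily `Δ ⊊ Σ_{k₁}` with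
`|Δ[x]| = |Δ[y]|` into another class does not change the social ranking on `{x, y}`. -/
def SI (R : (Finset X → Finset X → Prop) → X → X → Prop) : Prop :=
  ∀ (r r' : Finset X → Finset X → Prop) (L : List (Finset (Finset X)))
    (k₁ k₂ : ℕ) (x y : X) (Δ : Finset (Finset X)),
    IsClassList r L → k₁ < L.length → k₂ < L.length →
    Δ ⊂ L.getD k₁ ∅ → count Δ x = count Δ y →
    IsClassList r' (slide L k₁ k₂ Δ) →
    AgreeOn (R r) (R r') x y

/-- SSI (strong slide independence): as SI, but `Δ ⊆ Σ_{k₁}` may be the whole class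
(in which case the class disappears). -/
def SSI (R : (Finset X → Finset X → Prop) → X → X → Prop) : Prop :=
  ∀ (r r' : Finset X → Finset X → Prop) (L : List (Finset (Finset X)))
    (k₁ k₂ : ℕ) (x y : X) (Δ : Finset (Finset X)),
    IsClassList r L → k₁ < L.length → k₂ < L.length →
    Δ ⊆ L.getD k₁ ∅ → count Δ x = count Δ y →
    IsClassList r' (slide L k₁ k₂ Δ) →
    AgreeOn (R r) (R r') x y

/-- Top-SI: the condition of SI restricted to slides out of the best class (`k₁ = 1`,
i.e. index `0`). -/
def TopSI (R : (Finset X → Finset X → Prop) → X → X → Prop) : Prop :=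
  ∀ (r r' : Finset X → Finset X → Prop) (L : List (Finset (Finset X)))
    (k₂ : ℕ) (x y : X) (Δ : Finset (Finset X)),
    IsClassList r L → 0 < L.length → k₂ < L.length →
    Δ ⊂ L.getD 0 ∅ → count Δ x = count Δ y →
    IsClassList r' (slide L 0 k₂ Δ) →
    AgreeOn (R r) (R r') x y

/-- The class list of `≿' : Σ₁ ≻' ⋯ ≻' Σ_{k-1} ≻' Δ ≻' Σ_k \ Δ ≻' ⋯ ≻' Σ_l`
(empty classes disappear). -/
def inuiList (L : List (Finset (Finset X))) (k : ℕ) (Δ : Finset (Finset X)) :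
    List (Finset (Finset X)) :=
  (L.take k ++ [Δ, (L.getD k ∅) \ Δ] ++ L.drop (k + 1)).filter
    (fun C => decide (C ≠ ∅))

/-- INUI (independence of non-unanimous improvements). -/
def INUI (R : (Finset X → Finset X → Prop) → X → X → Prop) : Prop :=
  ∀ (r r' : Finset X → Finset X → Prop) (L : List (Finset (Finset X)))
    (k : ℕ) (Δ : Finset (Finset X)) (x y : X),
    IsClassList r L → k < L.length → Δ ⊆ L.getD k ∅ →
    (∃ S ∈ Δ, x ∉ S) → (∃ S ∈ Δ, y ∉ S) →
    IsClassList r' (inuiList L k Δ) →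
    AgreeOn (R r) (R r') x y

/-- The weak order `≿_π := {(π(S), π(T)) : S ≿ T}` induced by a permutation `π` of `X`. -/
def permRel (π : Equiv.Perm X) (r : Finset X → Finset X → Prop) :
    Finset X → Finset X → Prop :=
  fun A B => r (A.image π.symm) (B.image π.symm)

/-- NT (neutrality). -/
def NT (R : (Finset X → Finset X → Prop) → X → X → Prop) : Prop :=
  ∀ (π : Equiv.Perm X) (r : Finset X → Finset X → Prop), IsWeakOrder r →
    ∀ x y : X, (R (permRel π r) (π x) (π y) ↔ R r x y)

/-- IIC (independence of irrelevant coalitions). -/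
def IIC (R : (Finset X → Finset X → Prop) → X → X → Prop) : Prop :=
  ∀ (r r' : Finset X → Finset X → Prop), IsWeakOrder r → IsWeakOrder r' →
    ∀ x y : X,
      (∀ S : Finset X, x ∉ S → y ∉ S →
        (r (insert x S) (insert y S) ↔ r' (insert x S) (insert y S))) →
      (R r x y ↔ R r' x y)

/-! ### The social ranking solutions -/

/-- `θ_≿(x) = (|Σ₁[x]|, …, |Σ_l[x]|)`. -/
def theta (L : List (Finset (Finset X))) (x : X) : List ℕ := L.map (fun C => count C x)

/-- The lexicographic order `a ≥^L b` on vectors of naturals. -/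
def GeLex (a b : List ℕ) : Prop :=
  a = b ∨ ∃ k < a.length, (∀ j < k, a.getD j 0 = b.getD j 0) ∧ b.getD k 0 < a.getD k 0

/-- The dual lexicographic order `a ≥^DL b` (read from the last coordinate;
fewer appearances in worse classes is better). -/
def GeDualLex (a b : List ℕ) : Prop :=
  a = b ∨ ∃ k < a.length, (∀ j, k < j → a.getD j 0 = b.getD j 0) ∧ a.getD k 0 < b.getD k 0

/-- The lexicographic excellence solution `R^L` : `x R^L_≿ y ↔ θ_≿(x) ≥^L θ_≿(y)`. -/
def RL (r : Finset X → Finset X → Prop) (x y : X) : Prop :=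
  ∀ L, IsClassList r L → GeLex (theta L x) (theta L y)

/-- The dual lexicographic excellence solution `R^DL`. -/
def RDL (r : Finset X → Finset X → Prop) (x y : X) : Prop :=
  ∀ L, IsClassList r L → GeDualLex (theta L x) (theta L y)

/-- Plurality `R^P` : `x R^P_≿ y ↔ |Σ₁[x]| ≥ |Σ₁[y]|`. -/
def RP (r : Finset X → Finset X → Prop) (x y : X) : Prop :=
  ∀ L, IsClassList r L → count (L.getD 0 ∅) y ≤ count (L.getD 0 ∅) x

/-- `e_≿(x)` : the largest `k` such that `x` belongs to every coalition of each of the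
first `k` equivalence classes (`0` if `x ∉ T₁`). -/
def eIIS (L : List (Finset (Finset X))) (x : X) : ℕ :=
  (L.takeWhile (fun C => decide (∀ S ∈ C, x ∈ S))).length

/-- The intersection initial segment rule `R^IIS` : `x R^IIS_≿ y ↔ e_≿(x) ≥ e_≿(y)`. -/
def RIIS (r : Finset X → Finset X → Prop) (x y : X) : Prop :=
  ∀ L, IsClassList r L → eIIS L y ≤ eIIS L x

/-- The constant-`X` rule: everybody is ranked indifferent. -/
def RconstX : (Finset X → Finset X → Prop) → X → X → Prop := fun _ _ _ => True

/-- The split-plurality score `s^split_≿(z) = ∑_{S ∈ Σ₁ : z ∈ S} 1/|S|`. -/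
def splitScore (C : Finset (Finset X)) (z : X) : ℚ :=
  ∑ S ∈ C.filter (fun S => z ∈ S), (1 : ℚ) / (S.card : ℚ)

/-- Split-plurality `R^splitP`. -/
def RsplitP (r : Finset X → Finset X → Prop) (x y : X) : Prop :=
  ∀ L, IsClassList r L → splitScore (L.getD 0 ∅) y ≤ splitScore (L.getD 0 ∅) x

/-- Plurality with tie-breaking by a linear order `t = ▷` :
`x R^{P,▷}_≿ y ↔ (x P^P_≿ y ∨ (x I^P_≿ y ∧ x ▷ y))`. -/
def RPtie (t : X → X → Prop) (r : Finset X → Finset X → Prop) (x y : X) : Prop :=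
  ∀ L, IsClassList r L →
    (count (L.getD 0 ∅) y < count (L.getD 0 ∅) x ∨
      (count (L.getD 0 ∅) x = count (L.getD 0 ∅) y ∧ t x y))


theorem univ_class : IsClassList (X := X) (fun _ _ => True) [Finset.univ] := by
  refine ⟨?_, ?_, ?_⟩
  · intro C hC
    simp only [List.mem_singleton] at hC
    subst hC
    exact ⟨∅, Finset.mem_univ _⟩
  · intro S
    refine ⟨0, by simp, ?_⟩
    rintro i ⟨hi, -⟩
    simpa using hi
  · intro i j hi hj S _ T _
    simp at hi hj
    simp [hi, hj]

theorem class_eq (L : List (Finset (Finset X)))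
    (h : IsClassList (X := X) (fun _ _ => True) L) : L = [Finset.univ] := by
  obtain ⟨h1, h2, h3⟩ := h
  match L, h1, h2, h3 with
  | [], _, h2, _ =>
    obtain ⟨i, ⟨hi, _⟩, _⟩ := h2 ∅
    simp at hi
  | [C], _, h2, _ =>
    congr 1
    ext S
    obtain ⟨i, ⟨hi, hS⟩, _⟩ := h2 S
    simp at hi
    subst hi
    simpa using hS
  | C :: D :: L, h1, _, h3 =>
    obtain ⟨S, hS⟩ := h1 C (by simp)
    obtain ⟨T, hT⟩ := h1 D (by simp)
    have := (h3 1 0 (by simp) (by simp) T (by simpa using hT) S (by simpa using hS)).1 trivial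
    omega

theorem split_class (D : Finset (Finset X)) (h1 : D.Nonempty) (h2 : (Finset.univ \ D).Nonempty) :
    inuiList [Finset.univ] 0 D = [D, Finset.univ \ D] ∧
    IsClassList (fun S T => S ∈ D ∨ T ∉ D) [D, Finset.univ \ D] := by
  refine ⟨?_, ?_, ?_, ?_⟩
  · simp only [inuiList, List.take_zero, List.nil_append, List.getD_cons_zero, zero_add,
      List.drop_one, List.tail_cons, List.append_nil]
    rw [List.filter_eq_self]
    intro C hC
    simp only [List.mem_cons, List.not_mem_nil, or_false] at hC
    rcases hC with rfl | rfl
    · simpa using h1.ne_empty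
    · simpa only [decide_eq_true_eq] using h2.ne_empty
  · intro C hC
    simp only [List.mem_cons, List.not_mem_nil, or_false] at hC
    rcases hC with rfl | rfl <;> assumption
  · intro S
    by_cases hS : S ∈ D
    · refine ⟨0, by simpa using hS, ?_⟩
      rintro i ⟨hi, h⟩
      simp only [List.length_cons, List.length_nil] at hi
      interval_cases i
      · rfl
      · simp [hS] at h
    · refine ⟨1, by simpa using hS, ?_⟩
      rintro i ⟨hi, h⟩
      simp only [List.length_cons, List.length_nil] at hi
      interval_cases i
      · simp [hS] at h
      · rfl
  · intro i j hi hj S hS T hT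
    simp only [List.length_cons, List.length_nil] at hi hj
    interval_cases i <;> interval_cases j <;> simp_all

theorem not_RL_of_INUI (h : INUI (X := X) RL) (x y : X) (hxy : x ≠ y) :
    ¬ RL (fun _ _ : Finset X => True) y x := by
  have hD : (Finset.univ \ ({∅, {x}} : Finset (Finset X))).Nonempty :=
    ⟨{y}, by simp [Ne.symm hxy]⟩
  obtain ⟨he, hc⟩ := split_class ({∅, {x}} : Finset (Finset X)) ⟨∅, by simp⟩ hD
  have := h _ _ _ 0 {∅, {x}} x y univ_class (by simp) (by simp) ⟨∅, by simp⟩ ⟨∅, by simp⟩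
    (he ▸ hc) y (by simp) x (by simp)
  rw [this]
  intro hR
  have hx : count ({∅, {x}} : Finset (Finset X)) x = 1 := by
    simp [count, Finset.filter_insert, Finset.filter_singleton]
  have hy : count ({∅, {x}} : Finset (Finset X)) y = 0 := by
    simp [count, Finset.filter_insert, Finset.filter_singleton, Ne.symm hxy]
  rcases hR _ hc with h | ⟨k, hk, h1, h2⟩
  · simp [theta, hx, hy] at h
  · rcases k with _ | k
    · simp [theta, hx, hy] at h2
    · have := h1 0 (by omega)
      simp [theta, hx, hy] at this

theorem RL_true (x y : X)
    (h : count (Finset.univ : Finset (Finset X)) x ≤ count (Finset.univ : Finset (Finset X)) y) :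
    RL (fun _ _ : Finset X => True) y x := by
  intro L hL
  rw [class_eq L hL]
  rcases h.eq_or_lt with h | h
  · left
    simp [theta, h]
  · right
    exact ⟨0, by simp [theta], by simp, by simpa [theta] using h⟩

/-- If `|X| ≥ 3`, the lexicographic excellence solution does not satisfy INUI. -/
theorem lexcel_not_inui (hX : 3 ≤ Fintype.card X) :
    ¬ INUI (X := X) RL := by
  intro h
  obtain ⟨x, y, hxy⟩ := Fintype.exists_pair_of_one_lt_card (α := X) (by omega)
  rcases le_total (count (Finset.univ : Finset (Finset X)) x) (count Finset.univ y) with hc | hc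
  · exact not_RL_of_INUI h x y hxy (RL_true x y hc)
  · exact not_RL_of_INUI h y x hxy.symm (RL_true y x hc)

end SocialRanking
end

section
/- If |X| ≥ 3, the lexicographic excellence solution R^L does not satisfy independence from the best set (IBS): there exist ≿, ≿' ∈ ℛ(𝔛), where ≿' is obtained from ≿ by partitioning the best equivalence class of ≿ into ordered classes, and x, y ∈ X with x P^L_≿ y but not x P^L_{≿'} y. -/
/-!
Social ranking solutions (SRSs).  The set of individuals is a finite type `X`;
coalitions are elements of `Finset X` (so the domain of a power relation is the
whole power set `𝔛 = 2^X`).  A weak order `≿ ∈ ℛ(𝔛)` is encoded as a relation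
`r : Finset X → Finset X → Prop` together with (when needed) its list of
equivalence classes `L = [Σ₁, …, Σ_l]` in strictly decreasing order
(`IsClassList r L`).
-/

namespace SocialRanking

variable {X : Type*} [Fintype X] [DecidableEq X]

theorem aux_getD (f : Finset X → ℕ) (n i : ℕ) (hi : i < n) :
    ((List.range n).map (fun i => Finset.univ.filter (fun S => f S = i))).getD i ∅
      = Finset.univ.filter (fun S : Finset X => f S = i) := by
  simp [List.getD, hi]

theorem aux_classList (f : Finset X → ℕ) (n : ℕ) (hf : ∀ S, f S < n)
    (hs : ∀ i < n, ∃ S, f S = i) :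
    IsClassList (fun S T => f S ≤ f T)
      ((List.range n).map (fun i => Finset.univ.filter (fun S => f S = i))) := by
  refine ⟨?_, ?_, ?_⟩
  · intro C hC
    simp only [List.mem_map, List.mem_range] at hC
    obtain ⟨i, hi, rfl⟩ := hC
    obtain ⟨S, hS⟩ := hs i hi
    exact ⟨S, by simp [hS]⟩
  · intro S
    refine ⟨f S, ⟨by simpa using hf S, ?_⟩, ?_⟩
    · rw [aux_getD f n _ (hf S)]; simp
    · rintro j ⟨hj, h⟩
      have hj : j < n := by simpa using hj
      rw [aux_getD f n _ hj] at h
      simp at h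
      exact h.symm
  · intro i j hi hj S hS T hT
    have hi : i < n := by simpa using hi
    have hj : j < n := by simpa using hj
    rw [aux_getD f n _ hi] at hS
    rw [aux_getD f n _ hj] at hT
    simp at hS hT
    simp only [hS, hT]

theorem aux_head (r : Finset X → Finset X → Prop) (L : List (Finset (Finset X)))
    (h : IsClassList r L) : 0 < L.length ∧ ∀ S, S ∈ L.getD 0 ∅ ↔ ∀ T, r S T := by
  obtain ⟨h1, h2, h3⟩ := h
  have hl : 0 < L.length := by
    obtain ⟨i, ⟨hi, -⟩, -⟩ := h2 ∅
    omega
  refine ⟨hl, fun S => ⟨fun hS T => ?_, fun hS => ?_⟩⟩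
  · obtain ⟨j, ⟨hj, hT⟩, -⟩ := h2 T
    exact (h3 0 j hl hj S hS T hT).2 (Nat.zero_le _)
  · obtain ⟨i, ⟨hi, hSi⟩, -⟩ := h2 S
    have hne : (L.getD 0 ∅).Nonempty := by
      apply h1
      rw [List.getD_eq_getElem _ _ hl]
      exact List.getElem_mem hl
    obtain ⟨T, hT⟩ := hne
    have := (h3 i 0 hi hl S hSi T hT).1 (hS T)
    have h0 : i = 0 := by omega
    rwa [h0] at hSi

theorem aux_theta (L : List (Finset (Finset X))) (x : X) :
    (theta L x).getD 0 0 = count (L.getD 0 ∅) x := by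
  cases L <;> simp [theta, count]

/-- If `|X| ≥ 3`, the lexicographic excellence solution does not satisfy IBS. -/
theorem lexcel_not_ibs (hX : 3 ≤ Fintype.card X) :
    ¬ IBS (X := X) RL := by
  intro H
  obtain ⟨x, y, z, hxy, hxz, hyz⟩ := Fintype.two_lt_card_iff.1 (show 2 < Fintype.card X by omega)
  have e1 : ({x} : Finset X) ≠ {y} := by simpa using hxy
  have e2 : ({x, z} : Finset X) ≠ {y} := by
    intro h
    have : x ∈ ({y} : Finset X) := by rw [← h]; simp
    exact hxy (by simpa using this)
  have e3 : ({x, z} : Finset X) ≠ {x} := by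
    intro h
    have : z ∈ ({x} : Finset X) := by rw [← h]; simp
    exact hxz (Finset.mem_singleton.1 this).symm
  let f : Finset X → ℕ := fun S => if S = {y} then 0 else if S = {x} ∨ S = {x, z} then 1 else 2
  let g : Finset X → ℕ := fun S => f S - 1
  have fx : f {x} = 1 := by simp [f, hxy]
  have fy : f {y} = 0 := by simp [f]
  have f0 : f ∅ = 2 := by
    have : (∅ : Finset X) ≠ {x, z} := (Finset.insert_ne_empty _ _).symm
    have h1 : (∅ : Finset X) ≠ {x} := (Finset.singleton_ne_empty _).symm
    have h2 : (∅ : Finset X) ≠ {y} := (Finset.singleton_ne_empty _).symm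
    simp only [f, this, h1, h2, or_self, if_false]
  have hf : ∀ S, f S < 3 := by intro S; simp only [f]; split_ifs <;> omega
  have hF := aux_classList f 3 hf (by
    intro i hi
    interval_cases i
    exacts [⟨_, fy⟩, ⟨_, fx⟩, ⟨_, f0⟩])
  have hG := aux_classList g 2 (fun S => by have := hf S; simp only [g]; omega) (by
    intro i hi
    interval_cases i
    exacts [⟨{y}, by simp [g, fy]⟩, ⟨∅, by simp [g, f0]⟩])
  have c0 : Finset.univ.filter (fun S => f S = 0) = {{y}} := by
    ext S; simp only [f, Finset.mem_filter, Finset.mem_univ, true_and, Finset.mem_singleton]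
    split_ifs <;> simp_all
  have cg0 : Finset.univ.filter (fun S => g S = 0) = {{y}, {x}, {x, z}} := by
    ext S; simp only [g, f, Finset.mem_filter, Finset.mem_univ, true_and, Finset.mem_singleton,
      Finset.mem_insert]
    split_ifs <;> simp_all
  have cg1 : Finset.univ.filter (fun S => g S = 1) = Finset.univ.filter (fun S => f S = 2) := by
    ext S
    have := hf S
    simp only [g, Finset.mem_filter, Finset.mem_univ, true_and]
    omega
  have kx : count ({{y}, {x}, {x, z}} : Finset (Finset X)) x = 2 := by
    have : ({{y}, {x}, {x, z}} : Finset (Finset X)).filter (fun S => x ∈ S) = {{x}, {x, z}} := by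
      simp [Finset.filter_insert, Finset.filter_singleton, hxy]
    rw [count, this, Finset.card_pair e3.symm]
  have ky : count ({{y}, {x}, {x, z}} : Finset (Finset X)) y = 1 := by
    have : ({{y}, {x}, {x, z}} : Finset (Finset X)).filter (fun S => y ∈ S) = {{y}} := by
      simp [Finset.filter_insert, Finset.filter_singleton, hxy.symm, hyz]
    rw [count, this, Finset.card_singleton]
  have lx : count ({{y}} : Finset (Finset X)) x = 0 := by
    simp [count, Finset.filter_singleton, hxy]
  have ly : count ({{y}} : Finset (Finset X)) y = 1 := by
    simp [count, Finset.filter_singleton]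
  simp only [List.range_succ, List.range_zero, List.nil_append, List.cons_append, List.map_cons,
    List.map_nil, cg0, cg1] at hG
  simp only [List.range_succ, List.range_zero, List.nil_append, List.cons_append, List.map_cons,
    List.map_nil, c0] at hF
  have key := H _ _ {{y}, {x}, {x, z}} [Finset.univ.filter (fun S => f S = 2)]
    [{{y}}, Finset.univ.filter (fun S => f S = 1)] (by simp) hG hF x y
  have hP : StrictPart (RL (fun S T => g S ≤ g T)) x y := by
    constructor
    · intro L hL
      obtain ⟨hl, hh⟩ := aux_head _ L hL
      have hB : L.getD 0 ∅ = {{y}, {x}, {x, z}} := by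
        ext S
        rw [hh S, ← (aux_head _ _ hG).2 S]
        simp
      right
      refine ⟨0, by simpa [theta] using hl, by simp, ?_⟩
      rw [aux_theta, aux_theta, hB, kx, ky]
      omega
    · intro h
      rcases h _ hG with h | ⟨k, hk, hj, hlt⟩
      · simp [theta, kx, ky] at h
      · rcases Nat.eq_zero_or_pos k with rfl | hk0
        · simp [theta, kx, ky] at hlt
        · have := hj 0 hk0
          simp [theta, kx, ky] at this
  rcases (key hP).1 _ hF with h | ⟨k, hk, hj, hlt⟩
  · simp [theta, lx, ly] at h
  · rcases Nat.eq_zero_or_pos k with rfl | hk0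
    · simp [theta, lx, ly] at hlt
    · have := hj 0 hk0
      simp [theta, lx, ly] at this

end SocialRanking
end

section
/- If |X| ≥ 3, the intersection initial segment rule R^IIS satisfies none of slide independence (SI), strong slide independence (SSI), and independence of irrelevant coalitions (IIC). -/
/-!
Social ranking solutions (SRSs).  The set of individuals is a finite type `X`;
coalitions are elements of `Finset X` (so the domain of a power relation is the
whole power set `𝔛 = 2^X`).  A weak order `≿ ∈ ℛ(𝔛)` is encoded as a relation
`r : Finset X → Finset X → Prop` together with (when needed) its list of
equivalence classes `L = [Σ₁, …, Σ_l]` in strictly decreasing order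
(`IsClassList r L`).
-/

namespace SocialRanking

variable {X : Type*} [Fintype X] [DecidableEq X]

/-- The dichotomous relation with best class `C`. -/
def twoRel (C : Finset (Finset X)) (S T : Finset X) : Prop := S ∈ C ∨ T ∉ C

theorem twoRel_weak (C : Finset (Finset X)) : IsWeakOrder (twoRel C) := by
  refine ⟨fun a => ?_, fun a b => ?_, fun a b c => ?_⟩ <;> unfold twoRel <;> tauto

theorem twoRel_classList (C : Finset (Finset X)) (h : C.Nonempty) (h' : Cᶜ.Nonempty) :
    IsClassList (twoRel C) [C, Cᶜ] := by
  refine ⟨?_, ?_, ?_⟩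
  · simp [h, h']
  · intro S
    by_cases hS : S ∈ C
    · refine ⟨0, by simp [hS], ?_⟩
      rintro i ⟨hi, hi'⟩
      simp only [List.length_cons, List.length_nil] at hi
      interval_cases i
      · rfl
      · simp [hS] at hi'
    · refine ⟨1, by simp [hS], ?_⟩
      rintro i ⟨hi, hi'⟩
      simp only [List.length_cons, List.length_nil] at hi
      interval_cases i
      · simp [hS] at hi'
      · rfl
  · intro i j hi hj S hS T hT
    simp only [List.length_cons, List.length_nil] at hi hj
    interval_cases i <;> interval_cases j <;> simp_all [twoRel]

theorem riis_of_empty_top (r : Finset X → Finset X → Prop) (h : ∀ S, r ∅ S) (y x : X) :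
    RIIS r y x := by
  intro L hL
  obtain ⟨h1, h2, h3⟩ := hL
  cases L with
  | nil => simp [eIIS]
  | cons C L =>
    obtain ⟨S, hS⟩ := h1 C (by simp)
    obtain ⟨i, ⟨hi, hi'⟩, -⟩ := h2 ∅
    have := (h3 i 0 hi (by simp) ∅ hi' S (by simpa using hS)).1 (h S)
    obtain rfl : i = 0 := by omega
    have hC : ∅ ∈ C := by simpa using hi'
    have : eIIS (C :: L) x = 0 := by
      have : ¬ ∀ S ∈ C, x ∈ S := fun hh => by simpa using hh ∅ hC
      simp [eIIS, List.takeWhile_cons, this]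
    omega

theorem twoRel_not (x y : X) (hxy : x ≠ y) :
    ¬ RIIS (twoRel ({{x}} : Finset (Finset X))) y x := by
  intro h
  have := h _ (twoRel_classList {{x}} (by simp) ⟨{y}, by simp [hxy.symm]⟩)
  simp [eIIS, List.takeWhile_cons, hxy.symm] at this

theorem riis_not_si (x y : X) (hxy : x ≠ y) : ¬ SI (X := X) RIIS := by
  intro h
  have hc : IsClassList (twoRel ({{x}} : Finset (Finset X))) [{{x}}, {{x}}ᶜ] :=
    twoRel_classList {{x}} (by simp) ⟨{y}, by simp [hxy.symm]⟩
  have hy : ({y} : Finset X) ∈ ({{x}} ∪ {∅} : Finset (Finset X))ᶜ := by simp [hxy.symm]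
  have hc' : IsClassList (twoRel ({{x}} ∪ {∅} : Finset (Finset X)))
      [{{x}} ∪ {∅}, ({{x}} ∪ {∅})ᶜ] :=
    twoRel_classList _ ⟨{x}, by simp⟩ ⟨{y}, hy⟩
  have hs : slide [{{x}}, ({{x}} : Finset (Finset X))ᶜ] 1 0 {∅}
      = [{{x}} ∪ {∅}, ({{x}} ∪ {∅})ᶜ] := by
    have e : ({{x}} : Finset (Finset X))ᶜ \ {∅} = ({{x}} ∪ {∅})ᶜ := by
      ext S; simp
    have n1 : ({{x}} ∪ {∅} : Finset (Finset X)) ≠ ∅ :=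
      Finset.Nonempty.ne_empty ⟨{x}, by simp⟩
    have n2 : ({{x}} ∪ {∅} : Finset (Finset X))ᶜ ≠ ∅ := Finset.Nonempty.ne_empty ⟨{y}, hy⟩
    simp only [slide, List.getD_cons_succ, List.getD_cons_zero, List.set_cons_succ,
      List.set_cons_zero, e, List.filter_cons, n1, n2, ne_eq, not_false_eq_true, decide_true,
      if_true, List.filter_nil]
  have hss : ({∅} : Finset (Finset X)) ⊂ ({{x}} : Finset (Finset X))ᶜ := by
    rw [Finset.ssubset_iff_of_subset (by
      intro S hS
      obtain rfl := Finset.mem_singleton.1 hS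
      simp [eq_comm])]
    exact ⟨{y}, by simp [hxy.symm], by simp⟩
  have := h _ _ _ 1 0 x y {∅} hc (by simp) (by simp) (by simpa using hss)
    (by simp [count, Finset.filter_singleton]) (hs ▸ hc') y (by simp) x (by simp)
  exact twoRel_not x y hxy (this.2 (riis_of_empty_top _ (fun S => Or.inl (by simp)) y x))

theorem riis_not_iic (x y : X) (hxy : x ≠ y) : ¬ IIC (X := X) RIIS := by
  intro h
  refine twoRel_not x y hxy ((h (twoRel {{x}}) (twoRel ({{x}} ∪ {∅})) (twoRel_weak _)
    (twoRel_weak _) y x ?_).2 (riis_of_empty_top _ (fun S => Or.inl (by simp)) y x))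
  intro S _ _
  simp [twoRel]

/-- If `|X| ≥ 3`, the intersection initial segment rule satisfies none of SI, SSI
and IIC. -/
theorem iis_not_si_ssi_iic (hX : 3 ≤ Fintype.card X) :
    ¬ SI (X := X) RIIS ∧ ¬ SSI (X := X) RIIS ∧ ¬ IIC (X := X) RIIS := by
  obtain ⟨x, y, hxy⟩ := Fintype.exists_pair_of_one_lt_card (α := X) (by omega)
  refine ⟨riis_not_si x y hxy, fun h => riis_not_si x y hxy ?_, riis_not_iic x y hxy⟩
  intro r r' L k₁ k₂ a b D h1 h2 h3 h4
  exact h r r' L k₁ k₂ a b D h1 h2 h3 h4.1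

end SocialRanking
end

section
/- If |X| ≥ 2, the intersection initial segment rule R^IIS does not satisfy tops-only (TO): there exist ≿, ≿' ∈ ℛ(𝔛) with the same best equivalence class such that R^IIS_≿ ≠ R^IIS_{≿'}. -/
/-!
Social ranking solutions (SRSs).  The set of individuals is a finite type `X`;
coalitions are elements of `Finset X` (so the domain of a power relation is the
whole power set `𝔛 = 2^X`).  A weak order `≿ ∈ ℛ(𝔛)` is encoded as a relation
`r : Finset X → Finset X → Prop` together with (when needed) its list of
equivalence classes `L = [Σ₁, …, Σ_l]` in strictly decreasing order
(`IsClassList r L`).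
-/

namespace SocialRanking

variable {X : Type*} [Fintype X] [DecidableEq X]

/-- If `|X| ≥ 2`, the intersection initial segment rule does not satisfy tops-only. -/
theorem iis_not_to (hX : 2 ≤ Fintype.card X) :
    ¬ TO (X := X) RIIS := by
  intro h
  obtain ⟨x, y, hxy⟩ := Fintype.exists_pair_of_one_lt_card (by omega : 1 < Fintype.card X)
  have hx1 : ({x} : Finset X) ≠ Finset.univ := by
    intro e
    have : y ∈ ({x} : Finset X) := by rw [e]; exact Finset.mem_univ y
    exact hxy (Finset.mem_singleton.1 this).symm
  have hE : (∅ : Finset X) ≠ Finset.univ := by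
    intro e
    have : y ∈ (∅ : Finset X) := by rw [e]; exact Finset.mem_univ y
    simp at this
  have hEx : (∅ : Finset X) ≠ {x} := (Finset.singleton_ne_empty x).symm
  let f : Finset X → ℕ := fun S => if S = Finset.univ then 0 else 1
  let g : Finset X → ℕ := fun S => if S = Finset.univ then 0 else if S = {x} then 1 else 2
  have h1 : IsClassList (fun S T => f S ≤ f T)
      [{Finset.univ}, Finset.univ.filter (fun S : Finset X => S ≠ Finset.univ)] := by
    have key : ∀ i S, (i < 2 ∧ S ∈ ([{Finset.univ},
        Finset.univ.filter (fun S : Finset X => S ≠ Finset.univ)] :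
        List (Finset (Finset X))).getD i ∅) ↔ i = f S := by
      intro i S
      rcases i with _ | _ | i <;> by_cases hS : S = Finset.univ <;> simp [f, hS]
    refine ⟨?_, ?_, ?_⟩
    · intro C hC
      simp only [List.mem_cons, List.not_mem_nil, or_false] at hC
      rcases hC with rfl | rfl
      · simp
      · exact ⟨∅, by simp [hE]⟩
    · intro S
      exact ⟨f S, (key _ S).2 rfl, fun i hi => (key i S).1 hi⟩
    · intro i j hi hj S hS T hT
      rw [(key i S).1 ⟨hi, hS⟩, (key j T).1 ⟨hj, hT⟩]
  have h2 : IsClassList (fun S T => g S ≤ g T)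
      [{Finset.univ}, {{x}},
        Finset.univ.filter (fun S : Finset X => S ≠ Finset.univ ∧ S ≠ {x})] := by
    have key : ∀ i S, (i < 3 ∧ S ∈ ([{Finset.univ}, {{x}},
        Finset.univ.filter (fun S : Finset X => S ≠ Finset.univ ∧ S ≠ {x})] :
        List (Finset (Finset X))).getD i ∅) ↔ i = g S := by
      intro i S
      by_cases hS : S = Finset.univ
      · subst hS
        rcases i with _ | _ | _ | i <;> simp [g, hx1.symm]
      · by_cases hS' : S = {x}
        · subst hS'
          rcases i with _ | _ | _ | i <;> simp [g, hx1]
        · rcases i with _ | _ | _ | i <;> simp [g, hS, hS']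
    refine ⟨?_, ?_, ?_⟩
    · intro C hC
      simp only [List.mem_cons, List.not_mem_nil, or_false] at hC
      rcases hC with rfl | rfl | rfl
      · simp
      · simp
      · exact ⟨∅, by simp [hE, hEx]⟩
    · intro S
      exact ⟨g S, (key _ S).2 rfl, fun i hi => (key i S).1 hi⟩
    · intro i j hi hj S hS T hT
      rw [(key i S).1 ⟨hi, hS⟩, (key j T).1 ⟨hj, hT⟩]
  have heq := h _ _ _ _ _ h1 h2
  have hA : RIIS (fun S T => f S ≤ f T) y x := by
    intro L hL
    have he : ∀ z : X, eIIS L z = 1 := by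
      intro z
      obtain ⟨hne, hex, hr⟩ := hL
      obtain ⟨i, ⟨hi, hiU⟩, -⟩ := hex Finset.univ
      obtain ⟨j, ⟨hj, hjE⟩, -⟩ := hex ∅
      have fU : f Finset.univ = 0 := by simp [f]
      have fE : f ∅ = 1 := by simp [f, hE]
      have hij : i < j := by
        by_contra hc
        have := (hr j i hj hi _ hjE _ hiU).2 (by omega)
        simp only [fU, fE] at this
        omega
      match L, hne, hr, hi, hj, hiU, hjE with
      | [], _, _, hi, _, _, _ => simp at hi
      | [_], _, _, _, hj, _, _ => simp at hj; omega
      | A :: B :: L, hne, hr, hi, hj, hiU, hjE =>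
        obtain ⟨S, hS⟩ := hne A (by simp)
        have hi0 : i = 0 := by
          have := (hr i 0 hi (by simp) _ hiU S (by simpa using hS)).1 (by simp only [fU]; omega)
          omega
        subst hi0
        have hAz : ∀ S ∈ A, z ∈ S := by
          intro S hS
          have h0 := (hr 0 0 hi hi S (by simpa using hS) _ hiU).2 le_rfl
          have : S = Finset.univ := by
            by_contra hc
            simp [f, hc] at h0
          rw [this]; exact Finset.mem_univ z
        obtain ⟨T, hT⟩ := hne B (by simp)
        have hj1 : j = 1 := by
          have h10 : ¬ (f T ≤ f Finset.univ) := fun hh => by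
            have := (hr 1 0 (by simp) hi T (by simpa using hT) _ hiU).1 hh
            omega
          have := (hr j 1 hj (by simp) _ hjE T (by simpa using hT)).1
            (by simp only [fU, fE] at *; omega)
          omega
        subst hj1
        have hBz : ¬ ∀ S ∈ B, z ∈ S := fun hh => by
          have := hh ∅ (by simpa using hjE)
          simp at this
        unfold eIIS
        rw [List.takeWhile_cons_of_pos (by simpa using hAz),
          List.takeWhile_cons_of_neg (by simpa using hBz)]
        rfl
    rw [he x, he y]
  rw [heq] at hA
  have h3 := hA _ h2
  have hy : y ≠ x := hxy.symm
  have ex : ¬ ∀ S ∈ ({{x}} : Finset (Finset X)), y ∈ S := by simp [hy]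
  unfold eIIS at h3
  rw [List.takeWhile_cons_of_pos (p := fun C : Finset (Finset X) => decide (∀ S ∈ C, x ∈ S)) (by simp),
    List.takeWhile_cons_of_pos (p := fun C : Finset (Finset X) => decide (∀ S ∈ C, x ∈ S)) (by simp),
    List.takeWhile_cons_of_pos (p := fun C : Finset (Finset X) => decide (∀ S ∈ C, y ∈ S)) (by simp),
    List.takeWhile_cons_of_neg (p := fun C : Finset (Finset X) => decide (∀ S ∈ C, y ∈ S)) (by simp [hy])] at h3
  simp at h3


end SocialRanking
end

section
/- If |X| ≥ 2, the plurality SRS R^P satisfies neither strong slide independence (SSI) nor independence from the best set (IBS). -/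
/-!
Social ranking solutions (SRSs).  The set of individuals is a finite type `X`;
coalitions are elements of `Finset X` (so the domain of a power relation is the
whole power set `𝔛 = 2^X`).  A weak order `≿ ∈ ℛ(𝔛)` is encoded as a relation
`r : Finset X → Finset X → Prop` together with (when needed) its list of
equivalence classes `L = [Σ₁, …, Σ_l]` in strictly decreasing order
(`IsClassList r L`).
-/

namespace SocialRanking

variable {X : Type*} [Fintype X] [DecidableEq X]

theorem mem_first_iff {r : Finset X → Finset X → Prop} {L : List (Finset (Finset X))}
    (h : IsClassList r L) (S : Finset X) : S ∈ L.getD 0 ∅ ↔ ∀ T, r S T := by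
  obtain ⟨hne, hex, hr⟩ := h
  obtain ⟨i, ⟨hi, hSi⟩, -⟩ := hex S
  have h0 : 0 < L.length := by omega
  constructor
  · intro hS T
    obtain ⟨j, ⟨hj, hTj⟩, -⟩ := hex T
    exact (hr 0 j h0 hj S hS T hTj).2 (Nat.zero_le _)
  · intro hS
    have hm : L.getD 0 ∅ ∈ L := by
      rw [List.getD_eq_getElem _ _ h0]; exact List.getElem_mem h0
    obtain ⟨T, hT⟩ := hne _ hm
    have := (hr i 0 hi h0 S hSi T hT).1 (hS T)
    have hi0 : i = 0 := by omega
    rwa [hi0] at hSi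

theorem RP_iff {r : Finset X → Finset X → Prop} {L : List (Finset (Finset X))}
    (h : IsClassList r L) (x y : X) :
    RP r x y ↔ count (L.getD 0 ∅) y ≤ count (L.getD 0 ∅) x := by
  constructor
  · intro hr
    exact hr L h
  · intro hc L' h'
    have : L'.getD 0 ∅ = L.getD 0 ∅ := by
      ext S; rw [mem_first_iff h, mem_first_iff h']
    rwa [this]

theorem isClassList_of_rank (f : Finset X → ℕ) (L : List (Finset (Finset X)))
    (hne : ∀ C ∈ L, C.Nonempty) (hlt : ∀ S, f S < L.length)
    (hm : ∀ i, i < L.length → ∀ S, S ∈ L.getD i ∅ ↔ f S = i) :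
    IsClassList (fun S T => f S ≤ f T) L := by
  refine ⟨hne, fun S => ⟨f S, ⟨hlt S, (hm _ (hlt S) S).2 rfl⟩, ?_⟩, ?_⟩
  · rintro j ⟨hj, hS⟩
    exact ((hm j hj S).1 hS).symm
  · intro i j hi hj S hS T hT
    have h1 := (hm i hi S).1 hS
    have h2 := (hm j hj T).1 hT
    simp only [h1, h2]

/-- If `|X| ≥ 2`, plurality satisfies neither SSI nor IBS. -/
theorem plurality_not_ssi_ibs (hX : 2 ≤ Fintype.card X) :
    ¬ SSI (X := X) RP ∧ ¬ IBS (X := X) RP := by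
  obtain ⟨x, y, hxy⟩ := Fintype.one_lt_card_iff.1 (by omega : 1 < Fintype.card X)
  let A : Finset (Finset X) := {∅}
  let B : Finset (Finset X) := {{x}}
  let C : Finset (Finset X) := Finset.univ.filter (fun S => S ≠ ∅ ∧ S ≠ {x})
  have hyx : ({y} : Finset X) ≠ {x} := by
    intro h; exact hxy (Finset.singleton_injective h).symm
  have hC : C.Nonempty := ⟨{y}, by simp [C, hyx, Ne.symm hxy]⟩
  have h1 : IsClassList (fun S T : Finset X =>
      (if S = ∅ then 0 else if S = {x} then 1 else 2 : ℕ) ≤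
      (if T = ∅ then 0 else if T = {x} then 1 else 2 : ℕ)) [A, B, C] := by
    apply isClassList_of_rank (fun S : Finset X => if S = ∅ then 0 else if S = {x} then 1 else 2)
    · simp [A, B, hC]
    · intro S; simp only [List.length_cons, List.length_nil]; split_ifs <;> omega
    · intro i hi S
      simp only [List.length_cons, List.length_nil] at hi
      have hx : (∅ : Finset X) ≠ {x} := (Finset.singleton_ne_empty x).symm
      interval_cases i <;> simp [A, B, C] <;> split_ifs <;> simp_all
  have h2 : IsClassList (fun S T : Finset X =>
      (if S = ∅ then 0 else if S = {x} then 0 else 1 : ℕ) ≤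
      (if T = ∅ then 0 else if T = {x} then 0 else 1 : ℕ)) [B ∪ A, C] := by
    apply isClassList_of_rank (fun S : Finset X => if S = ∅ then 0 else if S = {x} then 0 else 1)
    · simp [A, B, hC]
    · intro S; simp only [List.length_cons, List.length_nil]; split_ifs <;> omega
    · intro i hi S
      simp only [List.length_cons, List.length_nil] at hi
      have hx : (∅ : Finset X) ≠ {x} := (Finset.singleton_ne_empty x).symm
      interval_cases i <;> simp [A, B, C] <;> grind
  have cA : ∀ z, count A z = 0 := by intro z; simp [count, A, Finset.filter_singleton]
  have cx : count (B ∪ A) x = 1 := by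
    simp [count, A, B, Finset.filter_insert, Finset.filter_singleton]
  have cy : count (B ∪ A) y = 0 := by
    simp [count, A, B, Finset.filter_insert, Finset.filter_singleton, Ne.symm hxy]
  have r1 := RP_iff h1 y x
  have r2 := RP_iff h2 y x
  have r3 := RP_iff h2 x y
  simp only [List.getD_cons_zero, cA, cx, cy] at r1 r2 r3
  constructor
  · intro h
    have hs : slide [A, B, C] 0 1 A = [B ∪ A, C] := by
      have : B ∪ A ≠ ∅ := by simp [A]
      simp [slide, hC.ne_empty, this]
    have := h _ _ [A, B, C] 0 1 x y A h1 (by simp) (by simp) (by simp) (by simp [cA])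
      (by rw [hs]; exact h2) y (by simp) x (by simp)
    rw [r1, r2] at this
    omega
  · intro h
    have := h _ _ (B ∪ A) [C] [A, B] (by simp) h2 h1 x y
      ⟨r3.2 (by omega), by rw [r2]; omega⟩
    exact this.2 (r1.2 (by omega))

end SocialRanking
end

section
/- The dual lexicographic excellence solution R^DL satisfies WIVIP and strong slide independence (SSI); moreover, if |X| ≥ 3, R^DL does not satisfy independence from the worst set (IWS). -/
/-!
Social ranking solutions (SRSs).  The set of individuals is a finite type `X`;
coalitions are elements of `Finset X` (so the domain of a power relation is the
whole power set `𝔛 = 2^X`).  A weak order `≿ ∈ ℛ(𝔛)` is encoded as a relation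
`r : Finset X → Finset X → Prop` together with (when needed) its list of
equivalence classes `L = [Σ₁, …, Σ_l]` in strictly decreasing order
(`IsClassList r L`).
-/

namespace SocialRanking

variable {X : Type*} [Fintype X] [DecidableEq X]

theorem nil_union_aux {L : List (Finset (Finset X))} (h : ∀ C ∈ L, C.Nonempty)
    (hu : ∀ S, ¬ ∃ C ∈ L, S ∈ C) : L = [] := by
  cases L with
  | nil => rfl
  | cons A L =>
    obtain ⟨S, hS⟩ := h A (by simp)
    exact absurd ⟨A, by simp, hS⟩ (hu S)

theorem uniq_aux (r : Finset X → Finset X → Prop) : ∀ (L L' : List (Finset (Finset X))),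
    (∀ C ∈ L, C.Nonempty) → (∀ C ∈ L', C.Nonempty) →
    L.Pairwise (fun A B => ∀ S ∈ A, ∀ T ∈ B, r S T ∧ ¬ r T S) →
    L'.Pairwise (fun A B => ∀ S ∈ A, ∀ T ∈ B, r S T ∧ ¬ r T S) →
    (∀ C ∈ L, ∀ S ∈ C, ∀ T ∈ C, r S T) → (∀ C ∈ L', ∀ S ∈ C, ∀ T ∈ C, r S T) →
    (∀ S, (∃ C ∈ L, S ∈ C) ↔ ∃ C ∈ L', S ∈ C) → L = L' := by
  intro L
  induction L with
  | nil =>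
    intro L' _ h' _ _ _ _ hu
    exact (nil_union_aux h' (fun S => by rw [← hu]; simp)).symm
  | cons A L ih =>
    intro L' h h' p p' q q' hu
    cases L' with
    | nil => exact nil_union_aux h (fun S => by rw [hu]; simp)
    | cons B L' =>
      rw [List.pairwise_cons] at p p'
      simp only [List.mem_cons, forall_eq_or_imp, exists_eq_or_imp] at h h' q q' hu
      have hAB : A = B := by
        ext S
        constructor
        · intro hS
          rcases (hu S).1 (Or.inl hS) with h1 | ⟨C, hC, hSC⟩
          · exact h1
          · exfalso
            obtain ⟨T, hT⟩ := h'.1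
            have h2 := p'.1 C hC T hT S hSC
            rcases (hu T).2 (Or.inl hT) with h3 | ⟨D, hD, hTD⟩
            · exact h2.2 (q.1 S hS T h3)
            · exact (p.1 D hD S hS T hTD).2 h2.1
        · intro hS
          rcases (hu S).2 (Or.inl hS) with h1 | ⟨C, hC, hSC⟩
          · exact h1
          · exfalso
            obtain ⟨T, hT⟩ := h.1
            have h2 := p.1 C hC T hT S hSC
            rcases (hu T).1 (Or.inl hT) with h3 | ⟨D, hD, hTD⟩
            · exact h2.2 (q'.1 S hS T h3)
            · exact (p'.1 D hD S hS T hTD).2 h2.1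
      subst hAB
      congr 1
      refine ih L' h.2 h'.2 p.2 p'.2 q.2 q'.2 (fun S => ?_)
      have hu' := hu S
      constructor
      · rintro ⟨C, hC, hSC⟩
        rcases hu'.1 (Or.inr ⟨C, hC, hSC⟩) with h3 | h3
        · have := p.1 C hC S h3 S hSC
          exact absurd this.1 this.2
        · exact h3
      · rintro ⟨C, hC, hSC⟩
        rcases hu'.2 (Or.inr ⟨C, hC, hSC⟩) with h3 | h3
        · have := p'.1 C hC S h3 S hSC
          exact absurd this.1 this.2
        · exact h3

theorem getD_eq_get' (L : List (Finset (Finset X))) (i : ℕ) (h : i < L.length) :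
    L.getD i ∅ = L[i] := by
  simp [h]

theorem IsClassList.props {r : Finset X → Finset X → Prop} {L : List (Finset (Finset X))}
    (h : IsClassList r L) : (∀ C ∈ L, C.Nonempty) ∧
    L.Pairwise (fun A B => ∀ S ∈ A, ∀ T ∈ B, r S T ∧ ¬ r T S) ∧
    (∀ C ∈ L, ∀ S ∈ C, ∀ T ∈ C, r S T) ∧ (∀ S, ∃ C ∈ L, S ∈ C) := by
  obtain ⟨h1, h2, h3⟩ := h
  refine ⟨h1, ?_, ?_, ?_⟩
  · rw [List.pairwise_iff_getElem]
    intro i j hi hj hij S hS T hT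
    rw [← getD_eq_get' L i hi] at hS
    rw [← getD_eq_get' L j hj] at hT
    rw [h3 i j hi hj S hS T hT, h3 j i hj hi T hT S hS]
    omega
  · intro C hC S hS T hT
    obtain ⟨i, hi, rfl⟩ := List.getElem_of_mem hC
    rw [← getD_eq_get' L i hi] at hS hT
    exact (h3 i i hi hi S hS T hT).2 le_rfl
  · intro S
    obtain ⟨i, ⟨hi, hS⟩, _⟩ := h2 S
    rw [getD_eq_get' L i hi] at hS
    exact ⟨_, List.getElem_mem hi, hS⟩

theorem IsClassList.uniq {r : Finset X → Finset X → Prop} {L L' : List (Finset (Finset X))}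
    (h : IsClassList r L) (h' : IsClassList r L') : L = L' := by
  obtain ⟨a, b, c, d⟩ := h.props
  obtain ⟨a', b', c', d'⟩ := h'.props
  exact uniq_aux r L L' a a' b b' c c' (fun S => ⟨fun _ => d' S, fun _ => d S⟩)

theorem RDL_iff {r : Finset X → Finset X → Prop} {L : List (Finset (Finset X))}
    (h : IsClassList r L) (x y : X) : RDL r x y ↔ GeDualLex (theta L x) (theta L y) :=
  ⟨fun H => H L h, fun H L' h' => by rw [← h.uniq h']; exact H⟩

theorem theta_getD (L : List (Finset (Finset X))) (x : X) (j : ℕ) :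
    (theta L x).getD j 0 = count (L.getD j ∅) x := by
  unfold theta
  by_cases h : j < L.length
  · simp [h]
  · simp [not_lt.1 h, count]

theorem theta_eq_iff (L : List (Finset (Finset X))) (x y : X) :
    theta L x = theta L y ↔ ∀ j, count (L.getD j ∅) x = count (L.getD j ∅) y := by
  constructor
  · intro h j
    rw [← theta_getD, ← theta_getD, h]
  · intro h
    unfold theta
    apply List.map_congr_left
    intro C hC
    obtain ⟨i, hi, rfl⟩ := List.getElem_of_mem hC
    have := h i
    rwa [getD_eq_get' L i hi] at this

theorem gdl_iff (L : List (Finset (Finset X))) (x y : X) :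
    GeDualLex (theta L x) (theta L y) ↔
    (∀ j, count (L.getD j ∅) x = count (L.getD j ∅) y) ∨
    ∃ k < L.length, (∀ j, k < j → count (L.getD j ∅) x = count (L.getD j ∅) y) ∧
      count (L.getD k ∅) x < count (L.getD k ∅) y := by
  unfold GeDualLex
  rw [theta_eq_iff]
  simp only [theta_getD]
  simp [theta]

theorem gdl_cons (A : Finset (Finset X)) (L : List (Finset (Finset X))) (x y : X) :
    GeDualLex (theta (A :: L) x) (theta (A :: L) y) ↔
    GeDualLex (theta L x) (theta L y) ∧
      (theta L x = theta L y → count A x ≤ count A y) := by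
  rw [gdl_iff, gdl_iff, theta_eq_iff]
  constructor
  · rintro (h | ⟨k, hk, h1, h2⟩)
    · exact ⟨Or.inl fun j => by simpa using h (j+1), fun _ => by simpa using (h 0).le⟩
    · cases k with
      | zero =>
        exact ⟨Or.inl fun j => by simpa using h1 (j+1) (by omega), fun _ => by simpa using h2.le⟩
      | succ k =>
        have h2' : count (L.getD k ∅) x < count (L.getD k ∅) y := by simpa using h2
        refine ⟨Or.inr ⟨k, by simpa using hk, fun j hj => by simpa using h1 (j+1) (by omega),
          h2'⟩, fun h => ?_⟩
        have := h k
        omega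
  · rintro ⟨h | ⟨k, hk, h1, h2⟩, h3⟩
    · rcases (h3 h).lt_or_eq with h4 | h4
      · refine Or.inr ⟨0, by simp, ?_, by simpa using h4⟩
        intro j hj
        obtain ⟨j, rfl⟩ : ∃ i, j = i + 1 := ⟨j - 1, by omega⟩
        simpa using h j
      · left
        intro j
        cases j with
        | zero => simpa using h4
        | succ j => simpa using h j
    · refine Or.inr ⟨k+1, by simpa using hk, ?_, by simpa using h2⟩
      intro j hj
      obtain ⟨j, rfl⟩ : ∃ i, j = i + 1 := ⟨j - 1, by omega⟩
      simpa using h1 j (by omega)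

theorem filter_aux (L : List (Finset (Finset X))) (x y : X) :
    (theta (L.filter (fun C => decide (C ≠ ∅))) x =
      theta (L.filter (fun C => decide (C ≠ ∅))) y ↔ theta L x = theta L y) ∧
    (GeDualLex (theta (L.filter (fun C => decide (C ≠ ∅))) x)
      (theta (L.filter (fun C => decide (C ≠ ∅))) y) ↔
        GeDualLex (theta L x) (theta L y)) := by
  induction L with
  | nil => simp
  | cons A L ih =>
    by_cases hA : A = ∅
    · subst hA
      rw [List.filter_cons_of_neg (by simp), gdl_cons, ih.1, ih.2]
      simp [theta, count]
    · rw [List.filter_cons_of_pos (by simpa using hA), gdl_cons, gdl_cons, ih.1, ih.2]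
      refine ⟨?_, Iff.rfl⟩
      have := ih.1
      simp only [theta, List.map_cons, List.cons.injEq] at this ⊢
      rw [this]

theorem count_sdiff {A Δ : Finset (Finset X)} (h : Δ ⊆ A) (x : X) :
    count (A \ Δ) x + count Δ x = count A x := by
  unfold count
  rw [← Finset.card_union_of_disjoint, ← Finset.filter_union, Finset.sdiff_union_of_subset h]
  exact Finset.disjoint_filter_filter Finset.sdiff_disjoint

theorem count_union {A Δ : Finset (Finset X)} (h : Disjoint A Δ) (x : X) :
    count (A ∪ Δ) x = count A x + count Δ x := by
  unfold count
  rw [Finset.filter_union, Finset.card_union_of_disjoint]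
  exact Finset.disjoint_filter_filter h

theorem count_compl (A : Finset (Finset X)) (x y : X) :
    count A x + count Aᶜ x = count A y + count Aᶜ y := by
  rw [← count_union disjoint_compl_right, ← count_union disjoint_compl_right,
    Finset.union_compl]
  unfold count
  refine Finset.card_bij (fun S _ => S.map (Equiv.swap x y).toEmbedding) ?_ ?_ ?_
  · intro S hS
    simp only [Finset.mem_filter, Finset.mem_univ, true_and] at hS ⊢
    exact Finset.mem_map.2 ⟨x, hS, by simp⟩
  · intro S _ T _ h
    exact Finset.map_injective _ h
  · intro S hS
    simp only [Finset.mem_filter, Finset.mem_univ, true_and] at hS ⊢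
    refine ⟨S.map (Equiv.swap x y).toEmbedding, Finset.mem_map.2 ⟨y, hS, by simp⟩, ?_⟩
    ext a
    simp

theorem wivip : WIVIP (X := X) RDL := by
  intro r C₁ C₂ h x y hx hy
  obtain ⟨T, hT, hyT⟩ := hy
  have hC : C₂ = C₁ᶜ := by
    obtain ⟨_, h2, _, h4⟩ := h.props
    have h2' : ∀ S ∈ C₁, ∀ T ∈ C₂, r S T ∧ ¬ r T S := by simpa using h2
    ext S
    rw [Finset.mem_compl]
    constructor
    · intro hS hS'
      exact (h2' S hS' S hS).2 (h2' S hS' S hS).1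
    · intro hS
      have := h4 S
      simpa [hS] using this
  have h1 : count C₁ y < count C₁ x := by
    unfold count
    apply Finset.card_lt_card
    rw [Finset.ssubset_iff_of_subset]
    · exact ⟨T, by simp [hT, hx T hT], by simp [hyT]⟩
    · intro S hS
      rw [Finset.mem_filter] at hS ⊢
      exact ⟨hS.1, hx S hS.1⟩
  have h2 := count_compl C₁ x y
  rw [← hC] at h2
  unfold StrictPart
  rw [RDL_iff h, RDL_iff h, gdl_cons, gdl_cons, gdl_cons, gdl_cons]
  simp only [theta, List.map_cons, List.map_nil, List.cons.injEq]
  have h3 : GeDualLex [] [] := Or.inl rfl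
  simp only [h3, true_and, forall_const, and_true]
  omega

theorem ssi : SSI (X := X) RDL := by
  intro r r' L k₁ k₂ x y Δ h hk₁ hk₂ hΔ hc h' a ha b hb
  have hab : count Δ a = count Δ b := by
    simp only [Set.mem_insert_iff, Set.mem_singleton_iff] at ha hb
    rcases ha with rfl | rfl <;> rcases hb with rfl | rfl <;> simp [hc]
  rw [RDL_iff h, RDL_iff h', slide, (filter_aux _ a b).2, gdl_iff, gdl_iff]
  set M := (L.set k₁ ((L.getD k₁ ∅) \ Δ)).set k₂ ((L.getD k₂ ∅) ∪ Δ) with hM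
  have hlen : M.length = L.length := by simp [hM]
  have key : ∀ j, count (M.getD j ∅) a + count (L.getD j ∅) b =
      count (M.getD j ∅) b + count (L.getD j ∅) a := by
    intro j
    by_cases hj : j < L.length
    · by_cases h2 : k₂ = j
      · subst h2
        have hMj : M.getD k₂ ∅ = L.getD k₂ ∅ ∪ Δ := by simp [hM, hk₂]
        rw [hMj]
        by_cases h1 : k₁ = k₂
        · subst h1
          rw [Finset.union_eq_left.2 hΔ]
          omega
        · have hd : Disjoint (L.getD k₂ ∅) Δ := by
            rw [Finset.disjoint_left]
            intro S hS hS'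
            obtain ⟨_, _, hu⟩ := h.2.1 S
            exact h1 ((hu k₁ ⟨hk₁, hΔ hS'⟩).trans (hu k₂ ⟨hk₂, hS⟩).symm)
          rw [count_union hd, count_union hd]
          omega
      · by_cases h1 : k₁ = j
        · subst h1
          have hMj : M.getD k₁ ∅ = L.getD k₁ ∅ \ Δ := by
            simp [hM, hk₁, List.getElem?_set, h2]
          rw [hMj]
          have := count_sdiff hΔ a
          have := count_sdiff hΔ b
          omega
        · have hMj : M.getD j ∅ = L.getD j ∅ := by
            simp [hM, List.getElem?_set, h2, h1]
          rw [hMj]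
          omega
    · have e1 : M.getD j ∅ = ∅ := by
        rw [List.getD_eq_default]; omega
      have e2 : L.getD j ∅ = ∅ := by
        rw [List.getD_eq_default]; omega
      rw [e1, e2]; simp [count]
  rw [hlen]
  have k1 : ∀ j, count (L.getD j ∅) a = count (L.getD j ∅) b ↔
      count (M.getD j ∅) a = count (M.getD j ∅) b := fun j => by
    have := key j
    omega
  have k2 : ∀ j, count (L.getD j ∅) a < count (L.getD j ∅) b ↔
      count (M.getD j ∅) a < count (M.getD j ∅) b := fun j => by
    have := key j
    omega
  simp only [k1, k2]

theorem mkClassList (f : Finset X → ℕ) (L : List (Finset (Finset X)))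
    (h1 : ∀ C ∈ L, C.Nonempty) (h2 : ∀ S, f S < L.length)
    (h3 : ∀ i < L.length, ∀ S, S ∈ L.getD i ∅ ↔ f S = i) :
    IsClassList (fun S T => f S ≤ f T) L := by
  refine ⟨h1, fun S => ⟨f S, ⟨h2 S, (h3 _ (h2 S) S).2 rfl⟩, ?_⟩, ?_⟩
  · rintro j ⟨hj, hS⟩
    exact ((h3 j hj S).1 hS).symm
  · intro i j hi hj S hS T hT
    rw [← (h3 i hi S).1 hS, ← (h3 j hj T).1 hT]

theorem not_iws (h : 3 ≤ Fintype.card X) : ¬ IWS (X := X) RDL := by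
  intro H
  obtain ⟨x, y, z, hxy, hxz, hyz⟩ := Fintype.two_lt_card_iff.1 h
  have n1 : ({x} : Finset X) ≠ {y} := by simpa using hxy
  have n2 : ({x} : Finset X) ≠ {y, z} := by
    intro e
    have : x ∈ ({y, z} : Finset X) := by rw [← e]; simp
    simp [hxy, hxz] at this
  have n3 : ({y} : Finset X) ≠ {y, z} := by
    intro e
    have : z ∈ ({y} : Finset X) := by rw [e]; simp
    simp [hyz.symm] at this
  let V : Finset (Finset X) := {{y}, {y, z}}
  have hxV : ({x} : Finset X) ∉ V := by simp [V, n1, n2]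
  let W : Finset (Finset X) := insert {x} V
  have hne : (Wᶜ).Nonempty := ⟨∅, by
    simp only [W, V, Finset.mem_compl, Finset.mem_insert, Finset.mem_singleton]
    have : (∅ : Finset X) ≠ {y, z} := (Finset.insert_ne_empty y {z}).symm
    simp [this]⟩
  have c1 : IsClassList (fun S T : Finset X => (if S ∈ W then 1 else 0) ≤
      (if T ∈ W then 1 else 0)) ([Wᶜ] ++ [W]) := by
    refine mkClassList (fun S => if S ∈ W then 1 else 0) _ ?_ ?_ ?_
    · simp only [List.cons_append, List.nil_append, List.mem_cons, List.not_mem_nil, or_false,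
        forall_eq_or_imp, forall_eq]
      exact ⟨hne, ⟨{x}, by simp [W]⟩⟩
    · intro S
      split_ifs <;> simp
    · intro i hi S
      have hi : i < 2 := by simpa using hi
      interval_cases i <;> by_cases hS : S ∈ W <;> simp [hS]
  let g : Finset X → ℕ := fun S => if S = {x} then 2 else if S ∈ V then 1 else 0
  have c2 : IsClassList (fun S T : Finset X => g S ≤ g T) ([Wᶜ] ++ [V, {{x}}]) := by
    refine mkClassList g _ ?_ ?_ ?_
    · simp only [List.cons_append, List.nil_append, List.mem_cons, List.not_mem_nil, or_false,
        forall_eq_or_imp, forall_eq]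
      exact ⟨hne, ⟨{y}, by simp [V]⟩, by simp⟩
    · intro S
      dsimp only [g]
      split_ifs <;> simp
    · intro i hi S
      have hi : i < 3 := by simpa using hi
      by_cases hS : S = {x}
      · subst hS
        interval_cases i <;> simp [g, W, hxV]
      · interval_cases i <;> by_cases hS' : S ∈ V <;> simp [g, W, hS, hS']
  have hVx : count V x = 0 := by
    simp [V, count, Finset.filter_insert, Finset.filter_singleton, hxy, hxz]
  have hVy : count V y = 2 := by
    simp [V, count, Finset.filter_insert, Finset.filter_singleton]
    rw [Finset.card_pair n3]
  have hsx : count {({x} : Finset X)} x = 1 := by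
    simp [count, Finset.filter_singleton]
  have hsy : count {({x} : Finset X)} y = 0 := by
    simp [count, Finset.filter_singleton, hxy.symm]
  have hW : W = {{x}} ∪ V := rfl
  have hd : Disjoint ({{x}} : Finset (Finset X)) V := by simpa using hxV
  have hWx : count W x = 1 := by rw [hW, count_union hd, hsx, hVx]
  have hWy : count W y = 2 := by rw [hW, count_union hd, hsy, hVy]
  have h3 : GeDualLex [] [] := Or.inl rfl
  have := H _ _ _ _ _ (by simp) c1 c2 x y (by
    unfold StrictPart
    rw [RDL_iff c1, RDL_iff c1]
    simp only [List.cons_append, List.nil_append, gdl_cons]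
    simp [theta, hWx, hWy, h3])
  unfold StrictPart at this
  rw [RDL_iff c2, RDL_iff c2] at this
  simp only [List.cons_append, List.nil_append, gdl_cons] at this
  simp [theta, hsx, hsy, h3] at this

/-- The dual lexicographic excellence solution satisfies WIVIP and SSI; moreover if
`|X| ≥ 3` it does not satisfy IWS. -/
theorem duallexcel_props [Nonempty X] :
    (WIVIP (X := X) RDL ∧ SSI (X := X) RDL) ∧
      (3 ≤ Fintype.card X → ¬ IWS (X := X) RDL) := by
  exact ⟨⟨wivip, ssi⟩, not_iws⟩

end SocialRanking
end
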